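/- For all regular languages L₁ and L₂ over a finite alphabet Σ and every b ∈ Σ, tc_b(L₁ ∩ L₂) ≤ tc_b(L₁)·tc_b(L₂). Moreover, for relatively prime positive integers n₁ and n₂ there exist regular languages L₁, L₂ with tc_b(Lᵢ) = nᵢ (i = 1, 2) such that tc_b(L₁ ∩ L₂) = n₁·n₂. -/

import Mathlib

/-- An incomplete DFA over alphabet `α` with state type `σ`:
the transition function is a partial function, modelled as `Option`-valued. -/
structure IDFA (α : Type) (σ : Type) where
  /-- The (partial) transition function. -/
  step : σ → α → Option σ
  /-- The start state. -/
  start : σ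
  /-- The set of accepting states. -/
  accept : Set σ

namespace IDFA

variable {α σ : Type}

/-- The extended (partial) transition function on words. -/
def evalFrom (A : IDFA α σ) (q : σ) (w : List α) : Option σ :=
  w.foldl (fun oq a => oq.bind fun p => A.step p a) (some q)

/-- Running the automaton from the start state. -/
def eval (A : IDFA α σ) (w : List α) : Option σ :=
  A.evalFrom A.start w

/-- The language recognized by an incomplete DFA: words on which the run is
defined and ends in an accepting state. -/
def accepts (A : IDFA α σ) : Set (List α) :=
  {w | ∃ q ∈ A.accept, A.eval w = some q}

/-- `#tr(A)`: the number of (defined) transitions of `A`. -/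
noncomputable def trCount (A : IDFA α σ) : ℕ :=
  {p : σ × α | (A.step p.1 p.2).isSome}.ncard

/-- `#tr(A, b)`: the number of `b`-transitions of `A`. -/
noncomputable def trCountOn (A : IDFA α σ) (b : α) : ℕ :=
  {q : σ | (A.step q b).isSome}.ncard

/-- An incomplete DFA is connected if every state is reachable from the start state. -/
def Connected (A : IDFA α σ) : Prop :=
  ∀ q : σ, ∃ w : List α, A.evalFrom A.start w = some q

end IDFA

/-- A language is regular iff it is recognized by some incomplete DFA with
finitely many states. -/
def IsRegularLang {α : Type} (L : Set (List α)) : Prop :=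
  ∃ (σ : Type) (_ : Finite σ) (A : IDFA α σ), A.accepts = L

/-- `tc(L)`: the transition complexity of `L`, i.e. the minimal number of
transitions of any incomplete DFA recognizing `L`. -/
noncomputable def tc {α : Type} (L : Set (List α)) : ℕ :=
  sInf {n | ∃ (σ : Type) (_ : Finite σ) (A : IDFA α σ), A.accepts = L ∧ A.trCount = n}

/-- `tc_b(L)`: the `b`-transition complexity of `L`, i.e. the minimal number of
`b`-transitions of any incomplete DFA recognizing `L`. -/
noncomputable def tcOn {α : Type} (L : Set (List α)) (b : α) : ℕ :=
  sInf {n | ∃ (σ : Type) (_ : Finite σ) (A : IDFA α σ), A.accepts = L ∧ A.trCountOn b = n}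

/-- `sc(L)`: the (incomplete-DFA) state complexity of `L`, i.e. the number of
states of a minimal incomplete DFA recognizing `L`. -/
noncomputable def sc {α : Type} (L : Set (List α)) : ℕ :=
  sInf {n | ∃ (σ : Type) (_ : Finite σ) (A : IDFA α σ), A.accepts = L ∧ Nat.card σ = n}

/-!
The product automaton has a `b`-transition exactly at the pairs of states that both have one, which
gives the upper bound. Conversely, a `b`-transition leaves the state reached by `u` as soon as some
word `u ++ b :: v` is accepted, and words with different left quotients reach different states, so
such words bound `tc_b` from below. For the words whose length is divisible by `n`, the powers
`b ^ k` with `k < n` give the lower bound `n`, attained by the `n`-cycle; intersecting two such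
languages amounts to taking the least common multiple.
-/

namespace IDFA

variable {α σ τ : Type} (A : IDFA α σ) (B : IDFA α τ)

theorem foldl_bind_step_none (w : List α) :
    w.foldl (fun oq a => oq.bind fun p => A.step p a) none = none := by
  induction w with
  | nil => rfl
  | cons _ _ ih => exact ih

theorem evalFrom_cons (q : σ) (a : α) (w : List α) :
    A.evalFrom q (a :: w) = (A.step q a).bind fun p => A.evalFrom p w := by
  simp only [evalFrom, List.foldl_cons, Option.bind_some]
  cases A.step q a with
  | none => exact A.foldl_bind_step_none w
  | some p => rfl

theorem evalFrom_append (q : σ) (u v : List α) :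
    A.evalFrom q (u ++ v) = (A.evalFrom q u).bind fun p => A.evalFrom p v := by
  induction u generalizing q with
  | nil => rfl
  | cons a u ih => simp only [List.cons_append, evalFrom_cons, ih, Option.bind_assoc]

theorem eval_append (u v : List α) :
    A.eval (u ++ v) = (A.eval u).bind fun p => A.evalFrom p v :=
  A.evalFrom_append A.start u v

theorem eval_concat (u : List α) (a : α) :
    A.eval (u ++ [a]) = (A.eval u).bind fun p => A.step p a :=
  A.eval_append u [a]

variable {A} in
theorem exists_eval_eq_some_of_append_cons_mem {u v : List α} {b : α}
    (h : u ++ b :: v ∈ A.accepts) : ∃ q, A.eval u = some q ∧ (A.step q b).isSome := by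
  obtain ⟨r, -, hr⟩ := h
  rw [eval_append] at hr
  obtain ⟨q, hq, hrun⟩ := Option.bind_eq_some_iff.1 hr
  rw [evalFrom_cons] at hrun
  obtain ⟨p, hp, -⟩ := Option.bind_eq_some_iff.1 hrun
  exact ⟨q, hq, Option.isSome_of_eq_some hp⟩

variable {A} in
theorem preimage_append_accepts_eq {u v : List α} (h : A.eval u = A.eval v) :
    (u ++ ·) ⁻¹' A.accepts = (v ++ ·) ⁻¹' A.accepts := by
  ext w
  simp only [Set.mem_preimage, accepts, Set.mem_ofPred_eq, eval_append, h]

theorem card_le_trCountOn [Finite σ] {ι : Type*} {b : α} {u : ι → List α}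
    (hext : ∀ i, ∃ v, u i ++ b :: v ∈ A.accepts)
    (hinj : Function.Injective fun i => (u i ++ ·) ⁻¹' A.accepts) :
    Nat.card ι ≤ A.trCountOn b := by
  have hstate (i : ι) : ∃ q, A.eval (u i) = some q ∧ (A.step q b).isSome :=
    (hext i).elim fun _ => exists_eval_eq_some_of_append_cons_mem
  choose state heval hstep using hstate
  have hstate_inj : Function.Injective fun i => (⟨state i, hstep i⟩ : {q | (A.step q b).isSome}) :=
    fun i j hij => hinj <| preimage_append_accepts_eq <| by
      rw [heval, heval, Subtype.mk.inj hij]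
  rw [trCountOn, ← Nat.card_coe_set_eq]
  exact Nat.card_le_card_of_injective _ hstate_inj

/-- The product automaton, which runs `A` and `B` in parallel and accepts when both do; a transition
is defined when it is defined in both components. It recognizes the intersection. -/
def inter : IDFA α (σ × τ) where
  step p a := Option.map₂ Prod.mk (A.step p.1 a) (B.step p.2 a)
  start := (A.start, B.start)
  accept := A.accept ×ˢ B.accept

theorem eval_inter (w : List α) :
    (A.inter B).eval w = Option.map₂ Prod.mk (A.eval w) (B.eval w) := by
  induction w using List.reverseRecOn with
  | nil => rfl
  | append_singleton u a ih =>
    simp only [eval_concat, ih]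
    cases A.eval u <;> cases B.eval u <;> simp [inter]

theorem accepts_inter : (A.inter B).accepts = A.accepts ∩ B.accepts := by
  ext w
  simp only [accepts, Set.mem_inter_iff, Set.mem_ofPred_eq, eval_inter]
  cases A.eval w <;> cases B.eval w <;> simp [inter]

theorem trCountOn_inter (b : α) :
    (A.inter B).trCountOn b = A.trCountOn b * B.trCountOn b := by
  have hdefined : {p | ((A.inter B).step p b).isSome}
      = {q | (A.step q b).isSome} ×ˢ {q | (B.step q b).isSome} := by
    ext ⟨p, q⟩
    simp only [Set.mem_ofPred_eq, Set.mem_prod, inter]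
    cases A.step p b <;> cases B.step q b <;> simp
  rw [trCountOn, hdefined, Set.ncard_prod, trCountOn, trCountOn]

/-- The complete automaton on an `n`-cycle that computes the length of its input modulo `n` and
accepts at `0`. For `n = 0` its state set `ZMod 0 = ℤ` is infinite. -/
def lengthMod (α : Type) (n : ℕ) : IDFA α (ZMod n) where
  step q _ := some (q + 1)
  start := 0
  accept := {0}

theorem eval_lengthMod (n : ℕ) (w : List α) :
    (lengthMod α n).eval w = some (w.length : ZMod n) := by
  induction w using List.reverseRecOn with
  | nil => simp [eval, evalFrom, lengthMod]
  | append_singleton u a ih =>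
    rw [eval_concat, ih]
    simp [lengthMod]

theorem trCountOn_lengthMod (n : ℕ) (b : α) : (lengthMod α n).trCountOn b = n := by
  simp [trCountOn, lengthMod]

end IDFA

/-- The language of all words whose length is a multiple of `n`, the witness for the tightness of
the bound. -/
def lengthMultiples (α : Type) (n : ℕ) : Set (List α) :=
  {w | n ∣ w.length}

section

variable {α : Type}

theorem replicate_mem_lengthMultiples {n k : ℕ} {b : α} :
    List.replicate k b ∈ lengthMultiples α n ↔ n ∣ k := by
  rw [lengthMultiples, Set.mem_ofPred_eq, List.length_replicate]

theorem lengthMultiples_inter (m n : ℕ) :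
    lengthMultiples α m ∩ lengthMultiples α n = lengthMultiples α (m.lcm n) :=
  Set.ext fun _ => Nat.lcm_dvd_iff.symm

theorem IDFA.accepts_lengthMod (n : ℕ) : (lengthMod α n).accepts = lengthMultiples α n := by
  ext w
  simp only [accepts, eval_lengthMod, lengthMultiples, Set.mem_ofPred_eq]
  simp [lengthMod, ZMod.natCast_eq_zero_iff]

theorem isRegularLang_lengthMultiples (n : ℕ) [NeZero n] : IsRegularLang (lengthMultiples α n) :=
  ⟨ZMod n, inferInstance, .lengthMod α n, IDFA.accepts_lengthMod n⟩

theorem preimage_replicate_append_lengthMultiples_injective (b : α) (n : ℕ) :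
    Function.Injective fun k : Fin n => (List.replicate k b ++ ·) ⁻¹' lengthMultiples α n := by
  intro i j hij
  have hdvd : n ∣ i + (n - i) ↔ n ∣ j + (n - i) := by
    simpa only [Set.mem_preimage, ← List.replicate_add, replicate_mem_lengthMultiples]
      using Set.ext_iff.1 hij (List.replicate (n - i) b)
  have hi : n ∣ i + (n - i) := by rw [Nat.add_sub_cancel' i.is_le']
  have hmod : i + (n - i) ≡ j + (n - i) [MOD n] :=
    (Nat.modEq_zero_iff_dvd.2 hi).trans (Nat.modEq_zero_iff_dvd.2 (hdvd.1 hi)).symm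
  exact Fin.ext <| (hmod.add_right_cancel' _).eq_of_lt_of_lt i.is_lt j.is_lt

theorem tcOn_le_trCountOn {σ : Type} [Finite σ] (A : IDFA α σ) (b : α) :
    tcOn A.accepts b ≤ A.trCountOn b :=
  Nat.sInf_le ⟨σ, inferInstance, A, rfl, rfl⟩

theorem IsRegularLang.exists_trCountOn_eq_tcOn {L : Set (List α)} (hL : IsRegularLang L) (b : α) :
    ∃ (σ : Type) (_ : Finite σ) (A : IDFA α σ), A.accepts = L ∧ A.trCountOn b = tcOn L b := by
  obtain ⟨σ, hσ, A, hA⟩ := hL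
  exact Nat.sInf_mem (s := {n | ∃ (σ : Type) (_ : Finite σ) (A : IDFA α σ),
    A.accepts = L ∧ A.trCountOn b = n}) ⟨_, σ, hσ, A, hA, rfl⟩

theorem IsRegularLang.card_le_tcOn {L : Set (List α)} (hL : IsRegularLang L) {ι : Type*} {b : α}
    {u : ι → List α} (hext : ∀ i, ∃ v, u i ++ b :: v ∈ L)
    (hinj : Function.Injective fun i => (u i ++ ·) ⁻¹' L) : Nat.card ι ≤ tcOn L b := by
  obtain ⟨σ, _, A, rfl, hcount⟩ := hL.exists_trCountOn_eq_tcOn b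
  exact hcount ▸ A.card_le_trCountOn hext hinj

theorem tcOn_inter_le {L₁ L₂ : Set (List α)} (h₁ : IsRegularLang L₁) (h₂ : IsRegularLang L₂)
    (b : α) : tcOn (L₁ ∩ L₂) b ≤ tcOn L₁ b * tcOn L₂ b := by
  obtain ⟨σ, _, A, rfl, hA⟩ := h₁.exists_trCountOn_eq_tcOn b
  obtain ⟨τ, _, B, rfl, hB⟩ := h₂.exists_trCountOn_eq_tcOn b
  rw [← hA, ← hB, ← A.accepts_inter B, ← A.trCountOn_inter B]
  exact tcOn_le_trCountOn (A.inter B) b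

theorem tcOn_lengthMultiples (n : ℕ) [NeZero n] (b : α) : tcOn (lengthMultiples α n) b = n := by
  apply le_antisymm
  · calc tcOn (lengthMultiples α n) b
      _ = tcOn (IDFA.lengthMod α n).accepts b := by rw [IDFA.accepts_lengthMod]
      _ ≤ (IDFA.lengthMod α n).trCountOn b := tcOn_le_trCountOn _ b
      _ = n := IDFA.trCountOn_lengthMod n b
  · have hext (k : Fin n) : ∃ v, List.replicate k b ++ b :: v ∈ lengthMultiples α n := by
      refine ⟨List.replicate (n - (k + 1)) b, ?_⟩
      rw [← List.replicate_succ, ← List.replicate_add, replicate_mem_lengthMultiples]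
      exact dvd_of_eq (by lia)
    simpa only [Nat.card_fin] using (isRegularLang_lengthMultiples n).card_le_tcOn hext
      (preimage_replicate_append_lengthMultiples_injective b n)

theorem tcOn_inter_le_and_tight_general (b : α) :
    (∀ L₁ L₂ : Set (List α), IsRegularLang L₁ → IsRegularLang L₂ →
      tcOn (L₁ ∩ L₂) b ≤ tcOn L₁ b * tcOn L₂ b) ∧
    (∀ n₁ n₂ : ℕ, 1 ≤ n₁ → 1 ≤ n₂ → Nat.Coprime n₁ n₂ →
      ∃ L₁ L₂ : Set (List α), IsRegularLang L₁ ∧ IsRegularLang L₂ ∧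
        tcOn L₁ b = n₁ ∧ tcOn L₂ b = n₂ ∧
        tcOn (L₁ ∩ L₂) b = n₁ * n₂) := by
  refine ⟨fun _ _ h₁ h₂ => tcOn_inter_le h₁ h₂ b, fun n₁ n₂ h₁ h₂ hcop => ?_⟩
  have : NeZero n₁ := .of_pos h₁
  have : NeZero n₂ := .of_pos h₂
  refine ⟨lengthMultiples α n₁, lengthMultiples α n₂, isRegularLang_lengthMultiples n₁,
    isRegularLang_lengthMultiples n₂, tcOn_lengthMultiples n₁ b, tcOn_lengthMultiples n₂ b, ?_⟩
  rw [lengthMultiples_inter, hcop.lcm_eq_mul, tcOn_lengthMultiples]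

end

/-- `tc_b(L₁ ∩ L₂) ≤ tc_b(L₁)·tc_b(L₂)` for all regular languages,
and for relatively prime positive `n₁, n₂` the bound is attained. -/
theorem tcOn_inter_le_and_tight {α : Type} [Finite α] (b : α) :
    (∀ L₁ L₂ : Set (List α), IsRegularLang L₁ → IsRegularLang L₂ →
      tcOn (L₁ ∩ L₂) b ≤ tcOn L₁ b * tcOn L₂ b) ∧
    (∀ n₁ n₂ : ℕ, 1 ≤ n₁ → 1 ≤ n₂ → Nat.Coprime n₁ n₂ →
      ∃ L₁ L₂ : Set (List α), IsRegularLang L₁ ∧ IsRegularLang L₂ ∧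
        tcOn L₁ b = n₁ ∧ tcOn L₂ b = n₂ ∧
        tcOn (L₁ ∩ L₂) b = n₁ * n₂) :=
  tcOn_inter_le_and_tight_general b
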